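/- arXiv:1101.0067 — 2 statements merged into one kernel-verified Lean document; each statement's English description precedes it below -/
import Mathlib

section
/- Connected components of the hyperbolic matrices: Let N ≥ 1 and for 0 ≤ k ≤ N set M_k := {a ∈ M(N,iℝ) : dim_ℂ E₊(a) = k}. Then each M_k is nonempty, and the sets M_0, …, M_N are exactly the connected components of M(N,iℝ): each M_k is open in M(N,iℝ), closed in M(N,iℝ), and connected. In particular, M(N,iℝ) has exactly N+1 connected components. -/
/-!
Write `M_k` for the hyperbolic matrices with `dim E₊ = k`.

*Each `M_k` is clopen.* For hyperbolic `a`, `dim E₊(a)` is the number of roots of the characteristic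
polynomial with positive real part (`finrank_Eplus`). Roots of characteristic polynomials of a
convergent sequence subconverge to the roots of the limit, and none of these is on the imaginary
axis, so the count is preserved in the limit and `M_k` is closed (`isClosed_rank`). Since `k` takes
only the values `0, …, N`, closedness of all of them gives openness (`isOpen_rank`).

*Each `M_k` is connected and nonempty.* A matrix `a ∈ M_k` is joined by a segment inside `M_k` to the
matrix which is `1` on `E₊(a)` and `-1` on `E₋(a)` (`segment_mem`, `joined_sgn`). All such sign
matrices with the same `k` are conjugate, and since the invertible matrices on a complex line
through the identity form a connected set, they lie in a connected subset of `M_k` (`sgn_joined`).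

A nonempty connected clopen set is the connected component of each of its points.
-/

open Module

/-- The set `M(N,iℝ)` of hyperbolic matrices: `N×N` complex matrices with no eigenvalue
on the imaginary axis. -/
def hypMatrix (N : ℕ) : Set (Matrix (Fin N) (Fin N) ℂ) :=
  {a | ∀ μ ∈ spectrum ℂ a, μ.re ≠ 0}

/-- `E₊(a)`: the sum of the generalized eigenspaces of `a` for eigenvalues with positive
real part. -/
noncomputable def Eplus (N : ℕ) (a : Matrix (Fin N) (Fin N) ℂ) : Submodule ℂ (Fin N → ℂ) :=
  ⨆ μ ∈ {μ : ℂ | 0 < μ.re}, Module.End.maxGenEigenspace (Matrix.toLin' a) μ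

/-! ### Spectral subspaces -/

/-- The sum of the generalized eigenspaces of `f` for the complex numbers in `S`; values in `S`
that are not eigenvalues contribute `⊥`. -/
def specSum {V : Type*} [AddCommGroup V] [Module ℂ V] (f : End ℂ V) (S : Set ℂ) :
    Submodule ℂ V :=
  ⨆ μ ∈ S, f.maxGenEigenspace μ

/-- The open right half-plane. -/
def rePos : Set ℂ := {μ | 0 < μ.re}

/-- The open left half-plane. -/
def reNeg : Set ℂ := {μ | μ.re < 0}

lemma disjoint_rePos_reNeg : Disjoint rePos reNeg :=
  Set.disjoint_left.2 fun μ (h : 0 < μ.re) (h' : μ.re < 0) => lt_asymm h h'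

lemma specSum_disjoint {V : Type*} [AddCommGroup V] [Module ℂ V] (f : End ℂ V) {S T : Set ℂ}
    (h : Disjoint S T) : Disjoint (specSum f S) (specSum f T) :=
  (End.independent_maxGenEigenspace f).disjoint_biSup_biSup h

lemma le_specSum {V : Type*} [AddCommGroup V] [Module ℂ V] (f : End ℂ V) {S : Set ℂ} {μ : ℂ}
    (h : μ ∈ S) : f.maxGenEigenspace μ ≤ specSum f S :=
  le_biSup (fun μ => f.maxGenEigenspace μ) h

lemma Eplus_eq {N : ℕ} (a : Matrix (Fin N) (Fin N) ℂ) :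
    Eplus N a = specSum (Matrix.toLin' a) rePos := rfl

lemma specSum_sup_of_hyp {N : ℕ} {a : Matrix (Fin N) (Fin N) ℂ} (ha : a ∈ hypMatrix N) :
    specSum (Matrix.toLin' a) rePos ⊔ specSum (Matrix.toLin' a) reNeg = ⊤ := by
  rw [eq_top_iff, ← End.iSup_maxGenEigenspace_eq_top (Matrix.toLin' a)]
  refine iSup_le fun μ => ?_
  by_cases hμ : μ ∈ spectrum ℂ a
  · rcases lt_or_gt_of_ne (ha μ hμ) with h | h
    · exact le_sup_of_le_right (le_specSum _ h)
    · exact le_sup_of_le_left (le_specSum _ h)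
  · have h0 : finrank ℂ (End.maxGenEigenspace (Matrix.toLin' a) μ) = 0 := by
      rw [LinearMap.finrank_maxGenEigenspace_eq, Matrix.charpoly_toLin']
      rw [Matrix.mem_spectrum_iff_isRoot_charpoly] at hμ
      exact Polynomial.rootMultiplicity_eq_zero hμ
    rw [Submodule.finrank_eq_zero.1 h0]
    exact bot_le

lemma hyp_of_sup {N : ℕ} {a : Matrix (Fin N) (Fin N) ℂ}
    (h : specSum (Matrix.toLin' a) rePos ⊔ specSum (Matrix.toLin' a) reNeg = ⊤) :
    a ∈ hypMatrix N := by
  intro μ hμ h0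
  have hd : Disjoint (specSum (Matrix.toLin' a) {μ})
      (specSum (Matrix.toLin' a) (rePos ∪ reNeg)) := by
    refine specSum_disjoint _ (Set.disjoint_left.2 ?_)
    rintro _ rfl (h | h)
    · exact absurd h0 (ne_of_gt h)
    · exact absurd h0 (ne_of_lt h)
  have hu : specSum (Matrix.toLin' a) (rePos ∪ reNeg) = ⊤ := by
    rw [← h]; exact iSup_union
  rw [hu, disjoint_top] at hd
  have hE : End.maxGenEigenspace (Matrix.toLin' a) μ = ⊥ := by
    rw [← hd]; simp [specSum]
  have he : End.HasEigenvalue (Matrix.toLin' a) μ := by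
    rw [End.hasEigenvalue_iff_mem_spectrum, Matrix.spectrum_toLin']; exact hμ
  exact he (le_bot_iff.1 (hE ▸ End.eigenspace_le_maxGenEigenspace))

/-- The working criterion for membership in a component: subspaces `U` and `V` spanning the whole
space and contained in `E₊(a)` and `E₋(a)` force `a` to be hyperbolic with `E₊(a) = U`. The equality
is the modular law applied to `U ≤ E₊(a)` and the complement `V`. -/
lemma hyp_and_Eplus {N : ℕ} {a : Matrix (Fin N) (Fin N) ℂ} {U V : Submodule ℂ (Fin N → ℂ)}
    (hU : U ≤ specSum (Matrix.toLin' a) rePos) (hV : V ≤ specSum (Matrix.toLin' a) reNeg)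
    (hUV : U ⊔ V = ⊤) : a ∈ hypMatrix N ∧ Eplus N a = U := by
  refine ⟨hyp_of_sup (top_le_iff.1 (hUV ▸ sup_le_sup hU hV)), ?_⟩
  refine (eq_of_le_of_inf_le_of_sup_le (z := V) hU ?_ ?_).symm
  · refine le_trans ?_ bot_le
    exact ((specSum_disjoint _ disjoint_rePos_reNeg).mono_right hV).le_bot
  · rw [hUV]; exact le_top

/-! ### Deformation to a sign matrix -/

/-- If `h - c` is a multiple of `f - μ` on the generalized `μ`-eigenspace of `f`, then that space
lies in the generalized `c`-eigenspace of `h`. -/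
lemma maxGen_le {V : Type*} [AddCommGroup V] [Module ℂ V] {f h : End ℂ V} {μ c r : ℂ}
    (H : ∀ w ∈ f.maxGenEigenspace μ, (h - c • 1) w = r • (f - μ • 1) w) :
    f.maxGenEigenspace μ ≤ h.maxGenEigenspace c := by
  have key : ∀ m : ℕ, ∀ w ∈ f.maxGenEigenspace μ,
      ((h - c • 1) ^ m) w = r ^ m • ((f - μ • 1) ^ m) w := by
    intro m
    induction m with
    | zero => intro w _; simp
    | succ m ih =>
      intro w hw
      have hm : (f - μ • 1) w ∈ f.maxGenEigenspace μ :=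
        End.mapsTo_maxGenEigenspace_of_comm
          ((Commute.refl f).sub_right ((Commute.one_right f).smul_right μ)) μ hw
      rw [pow_succ, Module.End.mul_apply, H w hw, map_smul, ih _ hm, pow_succ (f - μ • 1),
        Module.End.mul_apply, smul_smul, pow_succ, mul_comm]
  intro w hw
  obtain ⟨m, hm⟩ := (End.mem_maxGenEigenspace f μ w).1 hw
  exact (End.mem_maxGenEigenspace h c w).2 ⟨m, by rw [key m w hw, hm, smul_zero]⟩

/-- If `b` acts as `1` on `E₊(a)` and as `-1` on `E₋(a)`, the whole segment from `a` to `b` consists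
of hyperbolic matrices with the same `E₊`: on the generalized `μ`-eigenspace of `a`, the matrix
`s a + t b` has the single eigenvalue `s μ ± t`, which stays in the half-plane of `μ`. -/
lemma segment_mem {N : ℕ} {a b : Matrix (Fin N) (Fin N) ℂ} (ha : a ∈ hypMatrix N)
    (hp : ∀ v ∈ specSum (Matrix.toLin' a) rePos, Matrix.toLin' b v = v)
    (hn : ∀ v ∈ specSum (Matrix.toLin' a) reNeg, Matrix.toLin' b v = -v)
    {s t : ℝ} (hs : 0 ≤ s) (ht : 0 ≤ t) (hst : s + t = 1) :
    s • a + t • b ∈ hypMatrix N ∧ Eplus N (s • a + t • b) = Eplus N a := by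
  have hlin : Matrix.toLin' (s • a + t • b)
      = (s : ℂ) • Matrix.toLin' a + (t : ℂ) • Matrix.toLin' b := by
    have : s • a + t • b = (s : ℂ) • a + (t : ℂ) • b := by
      ext i j; simp
    rw [this, map_add, map_smul, map_smul]
  refine hyp_and_Eplus (V := specSum (Matrix.toLin' a) reNeg) ?_ ?_ (specSum_sup_of_hyp ha)
  · refine iSup₂_le fun μ hμ => ?_
    have hμ' : 0 < μ.re := hμ
    refine le_trans (maxGen_le (r := s) (c := s * μ + t) ?_)
      (le_specSum _ (?_ : _ ∈ rePos))
    · intro w hw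
      have := hp w (Submodule.mem_iSup_of_mem μ (Submodule.mem_iSup_of_mem hμ hw))
      rw [hlin]
      simp only [LinearMap.sub_apply, LinearMap.add_apply, LinearMap.smul_apply, this,
        Module.End.one_apply]
      module
    · show 0 < ((s : ℂ) * μ + t).re
      simp
      rcases hs.eq_or_lt with rfl | h
      · simp at hst; simp [hst]
      · positivity
  · refine iSup₂_le fun μ hμ => ?_
    have hμ' : μ.re < 0 := hμ
    refine le_trans (maxGen_le (r := s) (c := s * μ - t) ?_)
      (le_specSum _ (?_ : _ ∈ reNeg))
    · intro w hw
      have := hn w (Submodule.mem_iSup_of_mem μ (Submodule.mem_iSup_of_mem hμ hw))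
      rw [hlin]
      simp only [LinearMap.sub_apply, LinearMap.add_apply, LinearMap.smul_apply, this,
        Module.End.one_apply]
      module
    · show ((s : ℂ) * μ - t).re < 0
      simp
      rcases hs.eq_or_lt with rfl | h
      · simp at hst; simp [hst]
      · nlinarith [mul_pos h (neg_pos.2 hμ')]

/-! ### Dimension of `E₊` as a root count -/

/-- Only an upper bound is needed here: applied to both half-planes, it becomes an equality for
hyperbolic matrices because the dimensions add up to `N` and the root counts to at most `N`. -/
lemma finrank_specSum_le {N : ℕ} (a : Matrix (Fin N) (Fin N) ℂ) (S : Set ℂ)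
    [DecidablePred (· ∈ S)] :
    finrank ℂ (specSum (Matrix.toLin' a) S) ≤ (a.charpoly.roots.filter (· ∈ S)).card := by
  classical
  set f : End ℂ (Fin N → ℂ) := Matrix.toLin' a
  have key : ∀ s : Finset ℂ, finrank ℂ (⨆ μ ∈ s, f.maxGenEigenspace μ : Submodule ℂ (Fin N → ℂ))
      ≤ ∑ μ ∈ s, finrank ℂ (f.maxGenEigenspace μ) := by
    intro s
    induction s using Finset.induction_on with
    | empty => simp
    | insert x s hx ih =>
      rw [Finset.iSup_insert, Finset.sum_insert hx]
      exact (Submodule.finrank_add_le_finrank_add_finrank _ _).trans (by gcongr)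
  set s := (a.charpoly.roots.filter (· ∈ S)).toFinset with hs
  have hle : specSum f S ≤ ⨆ μ ∈ s, f.maxGenEigenspace μ := by
    refine iSup₂_le fun μ hμ => ?_
    by_cases hr : μ ∈ s
    · exact le_biSup (fun μ => f.maxGenEigenspace μ) hr
    · have h0 : finrank ℂ (f.maxGenEigenspace μ) = 0 := by
        rw [LinearMap.finrank_maxGenEigenspace_eq, Matrix.charpoly_toLin', ← Polynomial.count_roots,
          Multiset.count_eq_zero]
        intro h
        exact hr (by simp [hs, -Polynomial.mem_roots', h, hμ])
      rw [Submodule.finrank_eq_zero.1 h0]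
      exact bot_le
  refine (Submodule.finrank_mono hle).trans ((key s).trans ?_)
  rw [← Multiset.toFinset_sum_count_eq]
  refine Finset.sum_le_sum fun μ hμ => ?_
  rw [LinearMap.finrank_maxGenEigenspace_eq, Matrix.charpoly_toLin', ← Polynomial.count_roots,
    Multiset.count_filter_of_pos]
  rw [Multiset.mem_toFinset] at hμ
  exact (Multiset.mem_filter.1 hμ).2

/-- For hyperbolic `a`, the dimension of `E₊(a)` is the number of roots of the characteristic
polynomial in the right half-plane, counted with multiplicity. -/
lemma finrank_Eplus {N : ℕ} {a : Matrix (Fin N) (Fin N) ℂ} (ha : a ∈ hypMatrix N)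
    [DecidablePred (· ∈ rePos)] :
    finrank ℂ (Eplus N a) = (a.charpoly.roots.filter (· ∈ rePos)).card := by
  classical
  have h1 := finrank_specSum_le a rePos
  have h2 := finrank_specSum_le a reNeg
  have h3 := Submodule.finrank_sup_add_finrank_inf_eq (specSum (Matrix.toLin' a) rePos)
    (specSum (Matrix.toLin' a) reNeg)
  rw [specSum_sup_of_hyp ha, (specSum_disjoint _ disjoint_rePos_reNeg).eq_bot, finrank_top,
    finrank_bot, finrank_fin_fun] at h3
  have h4 : a.charpoly.roots.card ≤ N := by
    simpa using Polynomial.card_roots' a.charpoly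
  have h5 : (a.charpoly.roots.filter (· ∈ rePos)).card + (a.charpoly.roots.filter (· ∈ reNeg)).card
      ≤ a.charpoly.roots.card := by
    conv_rhs => rw [← Multiset.filter_add_not (· ∈ rePos) a.charpoly.roots, Multiset.card_add]
    gcongr
    exact Multiset.monotone_filter_right _ fun b hb hb' =>
      Set.disjoint_left.1 disjoint_rePos_reNeg hb' hb
  rw [Eplus_eq]
  omega

/-! ### Closedness and openness -/

lemma exists_spectrum_bound {N : ℕ} {u : ℕ → Matrix (Fin N) (Fin N) ℂ}
    {a : Matrix (Fin N) (Fin N) ℂ} (hu : Filter.Tendsto u Filter.atTop (nhds a)) :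
    ∃ C : ℝ, ∀ n, ∀ μ ∈ spectrum ℂ (u n), ‖μ‖ ≤ C := by
  -- The topology of the operator norm is the product topology by definition.
  let _ : NormedRing (Matrix (Fin N) (Fin N) ℂ) := Matrix.linftyOpNormedRing
  let _ : NormedAlgebra ℂ (Matrix (Fin N) (Fin N) ℂ) := Matrix.linftyOpNormedAlgebra
  have hb : Bornology.IsBounded (Set.range u) := Metric.isBounded_range_of_tendsto u hu
  obtain ⟨C, hC⟩ := hb.exists_norm_le
  refine ⟨C * ‖(1 : Matrix (Fin N) (Fin N) ℂ)‖, fun n μ hμ => ?_⟩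
  have : CompleteSpace (Matrix (Fin N) (Fin N) ℂ) := FiniteDimensional.complete ℂ _
  exact (spectrum.norm_le_norm_mul_of_mem hμ).trans
    (mul_le_mul_of_nonneg_right (hC _ ⟨n, rfl⟩) (norm_nonneg _))

lemma exists_roots_eq {N : ℕ} (a : Matrix (Fin N) (Fin N) ℂ) :
    ∃ l : Fin N → ℂ, a.charpoly.roots = Finset.univ.val.map l := by
  have hc : a.charpoly.roots.card = N := by
    rw [← (IsAlgClosed.splits a.charpoly).natDegree_eq_card_roots]; simp
  obtain ⟨L, hL⟩ := Quot.exists_rep a.charpoly.roots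
  change (L : Multiset ℂ) = _ at hL
  have hlen : L.length = N := by rw [← hc, ← hL]; rfl
  subst hlen
  refine ⟨L.get, ?_⟩
  rw [← hL]
  simp [Fin.univ_val_map]

lemma charpoly_eval_eq_prod {N : ℕ} {a : Matrix (Fin N) (Fin N) ℂ} {l : Fin N → ℂ}
    (h : a.charpoly.roots = Finset.univ.val.map l) (z : ℂ) :
    a.charpoly.eval z = ∏ i, (z - l i) := by
  rw [(IsAlgClosed.splits a.charpoly).eval_eq_prod_roots_of_monic a.charpoly_monic, h,
    Multiset.map_map]
  rfl

/-- Sequential closedness. The eigenvalue vectors of a convergent sequence of matrices are bounded,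
so a subsequence converges; its limit lists the roots of the limiting characteristic polynomial. No
root of the limit is on the imaginary axis, so the real parts eventually have the limiting signs. -/
lemma isClosed_rank (N k : ℕ) :
    IsClosed {a : ↥(hypMatrix N) | finrank ℂ ↥(Eplus N a.1) = k} := by
  classical
  have : FirstCountableTopology (Matrix (Fin N) (Fin N) ℂ) :=
    inferInstanceAs (FirstCountableTopology (Fin N → Fin N → ℂ))
  refine IsSeqClosed.isClosed fun u a hu hlim => ?_
  have hlim' : Filter.Tendsto (fun n => (u n).1) Filter.atTop (nhds a.1) :=
    (continuous_subtype_val.tendsto a).comp hlim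
  obtain ⟨C, hC⟩ := exists_spectrum_bound hlim'
  choose l hl using fun n => exists_roots_eq (u n).1
  have hmem : ∀ n, l n ∈ Metric.closedBall (0 : Fin N → ℂ) (max C 0) := by
    intro n
    rw [mem_closedBall_zero_iff, pi_norm_le_iff_of_nonneg (le_max_right _ _)]
    intro i
    refine (hC n _ ?_).trans (le_max_left _ _)
    rw [Matrix.mem_spectrum_iff_isRoot_charpoly]
    have : l n i ∈ (u n).1.charpoly.roots := by
      rw [hl n]; exact Multiset.mem_map_of_mem _ (Finset.mem_univ_val i)
    exact Polynomial.isRoot_of_mem_roots this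
  obtain ⟨l₀, -, φ, hφ, hφl⟩ := tendsto_subseq_of_bounded Metric.isBounded_closedBall hmem
  have hlim2 := hlim'.comp hφ.tendsto_atTop
  have heval : ∀ z : ℂ, a.1.charpoly.eval z = ∏ i, (z - l₀ i) := by
    intro z
    have h1 : Filter.Tendsto (fun n => ((u (φ n)).1.charpoly.eval z)) Filter.atTop
        (nhds (a.1.charpoly.eval z)) := by
      simp only [Matrix.eval_charpoly]
      have hc : Continuous fun m : Matrix (Fin N) (Fin N) ℂ => (Matrix.scalar (Fin N) z - m).det :=
        (continuous_const.sub continuous_id).matrix_det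
      exact (hc.tendsto a.1).comp hlim2
    have h2 : Filter.Tendsto (fun n => ((u (φ n)).1.charpoly.eval z)) Filter.atTop
        (nhds (∏ i, (z - l₀ i))) := by
      simp only [charpoly_eval_eq_prod (hl _)]
      have hc : Continuous fun m : Fin N → ℂ => ∏ i, (z - m i) := by fun_prop
      exact (hc.tendsto l₀).comp hφl
    exact tendsto_nhds_unique h1 h2
  have hroots : a.1.charpoly.roots = Finset.univ.val.map l₀ := by
    have : a.1.charpoly = ∏ i, (Polynomial.X - Polynomial.C (l₀ i)) := by
      refine Polynomial.funext fun z => ?_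
      rw [heval, Polynomial.eval_prod]; simp
    rw [this]
    have h := Polynomial.roots_multiset_prod_X_sub_C (Finset.univ.val.map l₀)
    rwa [Multiset.map_map] at h
  have hev : ∀ᶠ n in Filter.atTop, ∀ i, l (φ n) i ∈ rePos ↔ l₀ i ∈ rePos := by
    rw [Filter.eventually_all]
    intro i
    have hi : Filter.Tendsto (fun n => (l (φ n) i).re) Filter.atTop (nhds (l₀ i).re) :=
      (Complex.continuous_re.tendsto _).comp ((tendsto_pi_nhds.1 hφl) i)
    have hne : (l₀ i).re ≠ 0 := by
      refine a.2 _ ?_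
      rw [Matrix.mem_spectrum_iff_isRoot_charpoly]
      refine Polynomial.isRoot_of_mem_roots ?_
      rw [hroots]; exact Multiset.mem_map_of_mem _ (Finset.mem_univ_val i)
    rcases lt_or_gt_of_ne hne with h | h
    · filter_upwards [hi.eventually_lt_const h] with n hn
      exact iff_of_false (not_lt.2 hn.le) (not_lt.2 h.le)
    · filter_upwards [hi.eventually_const_lt h] with n hn
      exact iff_of_true hn h
  obtain ⟨n, hn⟩ := hev.exists
  have hk : finrank ℂ ↥(Eplus N (u (φ n)).1) = k := hu (φ n)
  show finrank ℂ ↥(Eplus N a.1) = k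
  rw [← hk, finrank_Eplus a.2, finrank_Eplus (u (φ n)).2, hroots, hl, Multiset.filter_map,
    Multiset.filter_map, Multiset.card_map, Multiset.card_map]
  congr 1
  refine Multiset.filter_congr fun i _ => ?_
  exact (hn i).symm

/-- The complement is the union of the finitely many closed sets for the other dimensions. -/
lemma isOpen_rank (N k : ℕ) :
    IsOpen {a : ↥(hypMatrix N) | finrank ℂ ↥(Eplus N a.1) = k} := by
  have : {a : ↥(hypMatrix N) | finrank ℂ ↥(Eplus N a.1) = k}
      = (⋃ j ∈ (Finset.range (N + 1)).erase k,
          {a : ↥(hypMatrix N) | finrank ℂ ↥(Eplus N a.1) = j})ᶜ := by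
    ext a
    have hle : finrank ℂ ↥(Eplus N a.1) ≤ N := by
      simpa using Submodule.finrank_le (Eplus N a.1)
    simp only [Set.mem_ofPred_eq, Set.mem_compl_iff, Set.mem_iUnion, Finset.mem_erase,
      Finset.mem_range, not_exists]
    constructor
    · rintro h j ⟨hj, -⟩ e
      exact hj (e.symm.trans h)
    · intro h
      by_contra hne
      exact h _ ⟨hne, by omega⟩ rfl
  rw [this]
  exact (isClosed_biUnion_finset fun j _ => isClosed_rank N j).isOpen_compl

/-! ### Connectedness -/

/-- `M_k` as a set of matrices rather than a subset of the subtype `hypMatrix N`. -/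
def rankSet (N k : ℕ) : Set (Matrix (Fin N) (Fin N) ℂ) :=
  {a | a ∈ hypMatrix N ∧ finrank ℂ (Eplus N a) = k}

/-- The matrix acting as `1` on `h (ℂᵏ × 0)` and as `-1` on `h (0 × ℂᵐ)`. -/
noncomputable def sgn {k m N : ℕ} (h : ((Fin k → ℂ) × (Fin m → ℂ)) ≃ₗ[ℂ] (Fin N → ℂ)) :
    Matrix (Fin N) (Fin N) ℂ :=
  LinearMap.toMatrix' (h.toLinearMap ∘ₗ
    (LinearMap.prodMap LinearMap.id (-LinearMap.id)) ∘ₗ h.symm.toLinearMap)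

lemma sgn_inl {k m N : ℕ} (h : ((Fin k → ℂ) × (Fin m → ℂ)) ≃ₗ[ℂ] (Fin N → ℂ)) (x : Fin k → ℂ) :
    Matrix.toLin' (sgn h) (h (x, 0)) = h (x, 0) := by
  simp [sgn]

lemma sgn_inr {k m N : ℕ} (h : ((Fin k → ℂ) × (Fin m → ℂ)) ≃ₗ[ℂ] (Fin N → ℂ)) (y : Fin m → ℂ) :
    Matrix.toLin' (sgn h) (h (0, y)) = -h (0, y) := by
  simp [sgn, ← map_neg]

lemma sgn_mem {k m N : ℕ} (h : ((Fin k → ℂ) × (Fin m → ℂ)) ≃ₗ[ℂ] (Fin N → ℂ)) :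
    sgn h ∈ rankSet N k := by
  obtain ⟨h1, h2⟩ := hyp_and_Eplus (a := sgn h)
    (U := LinearMap.range (h.toLinearMap ∘ₗ LinearMap.inl ℂ (Fin k → ℂ) (Fin m → ℂ)))
    (V := LinearMap.range (h.toLinearMap ∘ₗ LinearMap.inr ℂ (Fin k → ℂ) (Fin m → ℂ)))
    (by
      rintro _ ⟨x, rfl⟩
      refine le_specSum _ (show (1 : ℂ) ∈ rePos by simp [rePos])
        (End.eigenspace_le_maxGenEigenspace (End.mem_eigenspace_iff.2 ?_))
      simpa using sgn_inl h x)
    (by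
      rintro _ ⟨y, rfl⟩
      refine le_specSum _ (show (-1 : ℂ) ∈ reNeg by simp [reNeg])
        (End.eigenspace_le_maxGenEigenspace (End.mem_eigenspace_iff.2 ?_))
      simpa using sgn_inr h y)
    (by
      rw [LinearMap.range_comp, LinearMap.range_comp, ← Submodule.map_sup,
        LinearMap.sup_range_inl_inr, Submodule.map_top, LinearEquiv.range])
  refine ⟨h1, ?_⟩
  rw [h2, LinearMap.finrank_range_of_inj]
  · simp
  · exact h.injective.comp LinearMap.inl_injective

/-- Conjugating `sgn h` by `g` amounts to composing `h` with `g`. -/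
lemma sgn_trans {k m N : ℕ} (h : ((Fin k → ℂ) × (Fin m → ℂ)) ≃ₗ[ℂ] (Fin N → ℂ))
    (g : Matrix (Fin N) (Fin N) ℂ) (hg : g.det ≠ 0) :
    ∃ h' : ((Fin k → ℂ) × (Fin m → ℂ)) ≃ₗ[ℂ] (Fin N → ℂ),
      (∀ x, h' x = Matrix.toLin' g (h x)) ∧ g * sgn h * g⁻¹ = sgn h' := by
  have hu : IsUnit g.det := hg.isUnit
  let e : (Fin N → ℂ) ≃ₗ[ℂ] (Fin N → ℂ) :=
    LinearEquiv.ofLinearMap (Matrix.toLin' g) (Matrix.toLin' g⁻¹)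
      (by rw [← Matrix.toLin'_mul, Matrix.mul_nonsing_inv g hu, Matrix.toLin'_one])
      (by rw [← Matrix.toLin'_mul, Matrix.nonsing_inv_mul g hu, Matrix.toLin'_one])
  refine ⟨h.trans e, fun x => rfl, ?_⟩
  apply Matrix.toLin'.injective
  simp only [sgn, Matrix.toLin'_mul, Matrix.toLin'_toMatrix']
  rfl

/-- Any two sign matrices with the same `k` lie in a common connected subset of `M_k`. They are
conjugate by some invertible `g`; the line `z ↦ z g + (1 - z)` in the complex variable `z` is
singular at finitely many `z` only, and the complement of a countable set in `ℂ` is connected. -/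
lemma sgn_joined {k m N : ℕ} (h₀ h : ((Fin k → ℂ) × (Fin m → ℂ)) ≃ₗ[ℂ] (Fin N → ℂ)) :
    ∃ t ⊆ rankSet N k, sgn h₀ ∈ t ∧ sgn h ∈ t ∧ IsPreconnected t := by
  classical
  set g : Matrix (Fin N) (Fin N) ℂ := LinearMap.toMatrix' (h₀.symm.trans h).toLinearMap with hg
  have hgdet : g.det ≠ 0 := by
    rw [hg, LinearMap.det_toMatrix']
    exact (LinearEquiv.isUnit_det' (h₀.symm.trans h)).ne_zero
  let G : ℂ → Matrix (Fin N) (Fin N) ℂ := fun z => z • g + (1 - z) • 1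
  have hG : Continuous G := by fun_prop
  -- `det (G z)` is polynomial in `z`, and it is nonzero since `G 0 = 1`.
  let p : Polynomial ℂ :=
    ((Polynomial.X : Polynomial ℂ) • g.map Polynomial.C +
      (1 - Polynomial.X : Polynomial ℂ) • (1 : Matrix (Fin N) (Fin N) (Polynomial ℂ))).det
  have hp : ∀ z, p.eval z = (G z).det := by
    intro z
    show Polynomial.evalRingHom z p = _
    rw [RingHom.map_det]
    congr 1
    ext i j
    by_cases hij : i = j <;> simp [G, hij, mul_comm _ z]
  have hfin : {z : ℂ | (G z).det = 0}.Countable := by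
    refine Set.Finite.countable ?_
    have hp0 : p ≠ 0 := by
      intro h
      have := hp 0
      simp [h, G] at this
    refine (Polynomial.finite_setOfPred_isRoot hp0).subset fun z hz => ?_
    show p.eval z = 0
    rw [hp]; exact hz
  have hconn := (hfin.isPathConnected_compl_of_one_lt_rank
    (by rw [Complex.rank_real_complex]; exact Nat.one_lt_ofNat)).isConnected.isPreconnected
  refine ⟨(fun z => G z * sgn h₀ * (G z)⁻¹) '' {z : ℂ | (G z).det = 0}ᶜ, ?_, ?_, ?_, ?_⟩
  · rintro _ ⟨z, hz, rfl⟩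
    obtain ⟨h', -, h2⟩ := sgn_trans h₀ (G z) hz
    show G z * sgn h₀ * (G z)⁻¹ ∈ _
    rw [h2]; exact sgn_mem h'
  · exact ⟨0, by simp [G], by simp [G]⟩
  · refine ⟨1, by simpa [G] using hgdet, ?_⟩
    obtain ⟨h', h1, h2⟩ := sgn_trans h₀ g hgdet
    have : h' = h := by
      ext1 x
      simp [h1, hg]
    simp only [G, one_smul, sub_self, zero_smul, add_zero]
    rw [h2, this]
  · refine hconn.image _ ?_
    simp only [Matrix.inv_def, Ring.inverse_eq_inv']
    refine ContinuousOn.mul (hG.continuousOn.mul continuousOn_const) ?_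
    refine ContinuousOn.smul (hG.matrix_det.continuousOn.inv₀ fun z hz => hz) ?_
    exact hG.matrix_adjugate.continuousOn

/-- Every `a ∈ M_k` is joined within `M_k` by a segment to a sign matrix adapted to
`ℂᴺ = E₊(a) ⊕ E₋(a)`. -/
lemma joined_sgn {k m N : ℕ} (hN : k + m = N) {a : Matrix (Fin N) (Fin N) ℂ}
    (ha : a ∈ rankSet N k) :
    ∃ h : ((Fin k → ℂ) × (Fin m → ℂ)) ≃ₗ[ℂ] (Fin N → ℂ),
      ∃ t ⊆ rankSet N k, a ∈ t ∧ sgn h ∈ t ∧ IsPreconnected t := by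
  have hc : IsCompl (specSum (Matrix.toLin' a) rePos) (specSum (Matrix.toLin' a) reNeg) :=
    ⟨specSum_disjoint _ disjoint_rePos_reNeg, codisjoint_iff.2 (specSum_sup_of_hyp ha.1)⟩
  have hk : finrank ℂ (specSum (Matrix.toLin' a) rePos) = k := ha.2
  have hm : finrank ℂ (specSum (Matrix.toLin' a) reNeg) = m := by
    have := Submodule.finrank_add_eq_of_isCompl hc
    rw [finrank_fin_fun] at this
    omega
  let e₁ : (Fin k → ℂ) ≃ₗ[ℂ] specSum (Matrix.toLin' a) rePos :=
    LinearEquiv.ofFinrankEq _ _ (by rw [hk, finrank_fin_fun])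
  let e₂ : (Fin m → ℂ) ≃ₗ[ℂ] specSum (Matrix.toLin' a) reNeg :=
    LinearEquiv.ofFinrankEq _ _ (by rw [hm, finrank_fin_fun])
  let h := (LinearEquiv.prodCongr e₁ e₂).trans (Submodule.prodEquivOfIsCompl _ _ hc)
  refine ⟨h, segment ℝ a (sgn h), ?_, left_mem_segment _ _ _, right_mem_segment _ _ _,
    (convex_segment _ _).isPreconnected⟩
  rintro _ ⟨s, t, hs, ht, hst, rfl⟩
  obtain ⟨h1, h2⟩ := segment_mem (b := sgn h) ha.1
    (by
      intro v hv
      have : h (e₁.symm ⟨v, hv⟩, 0) = v := by simp [h]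
      rw [← this]; exact sgn_inl h _)
    (by
      intro v hv
      have : h (0, e₂.symm ⟨v, hv⟩) = v := by simp [h]
      rw [← this]; exact sgn_inr h _) hs ht hst
  exact ⟨h1, by rw [h2]; exact ha.2⟩

lemma rankSet_isConnected {N k : ℕ} (hk : k ≤ N) : IsConnected (rankSet N k) := by
  obtain ⟨m, rfl⟩ := Nat.exists_eq_add_of_le hk
  let h₀ : ((Fin k → ℂ) × (Fin m → ℂ)) ≃ₗ[ℂ] (Fin (k + m) → ℂ) :=
    LinearEquiv.ofFinrankEq _ _ (by simp)
  refine ⟨⟨_, sgn_mem h₀⟩, isPreconnected_of_forall (sgn h₀) fun a ha => ?_⟩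
  obtain ⟨h, t, ht, hat, hht, htc⟩ := joined_sgn rfl ha
  obtain ⟨s, hs, h0s, hhs, hsc⟩ := sgn_joined h₀ h
  exact ⟨s ∪ t, Set.union_subset hs ht, Or.inl h0s, Or.inr hat, hsc.union _ hhs hht htc⟩

/-- **Connected components of the hyperbolic matrices**: for `0 ≤ k ≤ N` the set
`M_k = {a ∈ M(N,iℝ) : dim E₊(a) = k}` is nonempty, open, closed and connected in
`M(N,iℝ)`, and these sets are exactly the connected components of `M(N,iℝ)`; in
particular `M(N,iℝ)` has exactly `N+1` connected components. -/
theorem hyperbolic_matrices_components (N : ℕ) (hN : 1 ≤ N) :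
    (∀ k : ℕ, k ≤ N →
      ({a : ↥(hypMatrix N) | finrank ℂ ↥(Eplus N a.1) = k}.Nonempty ∧
        IsOpen {a : ↥(hypMatrix N) | finrank ℂ ↥(Eplus N a.1) = k} ∧
        IsClosed {a : ↥(hypMatrix N) | finrank ℂ ↥(Eplus N a.1) = k} ∧
        IsConnected {a : ↥(hypMatrix N) | finrank ℂ ↥(Eplus N a.1) = k})) ∧
    ∀ a : ↥(hypMatrix N),
      connectedComponent a =
        {b : ↥(hypMatrix N) | finrank ℂ ↥(Eplus N b.1) = finrank ℂ ↥(Eplus N a.1)} := by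
  have hconn : ∀ k ≤ N, IsConnected {a : ↥(hypMatrix N) | finrank ℂ ↥(Eplus N a.1) = k} := by
    intro k hk
    have himg : (Subtype.val '' {a : ↥(hypMatrix N) | finrank ℂ ↥(Eplus N a.1) = k})
        = rankSet N k := by
      ext a
      simp only [rankSet, Set.mem_image, Set.mem_ofPred_eq, Subtype.exists, exists_and_right,
        exists_eq_right]
      exact ⟨fun ⟨h, h'⟩ => ⟨h, h'⟩, fun ⟨h, h'⟩ => ⟨h, h'⟩⟩
    have h := rankSet_isConnected hk
    rw [← himg] at h
    exact ⟨h.nonempty.of_image, Topology.IsInducing.subtypeVal.isPreconnected_image.1 h.2⟩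
  refine ⟨fun k hk => ⟨(hconn k hk).nonempty, isOpen_rank N k, isClosed_rank N k, hconn k hk⟩,
    fun a => ?_⟩
  have hle : finrank ℂ ↥(Eplus N a.1) ≤ N := by
    simpa using Submodule.finrank_le (Eplus N a.1)
  exact subset_antisymm
    (IsClopen.connectedComponent_subset ⟨isClosed_rank N _, isOpen_rank N _⟩ rfl)
    ((hconn _ hle).isPreconnected.subset_connectedComponent rfl)
end

section
/- Homotopy type of the components of the hyperbolic matrices: Let N ≥ 1 and 0 ≤ k ≤ N. The space M_k := {a ∈ M(N,iℝ) : dim_ℂ E₊(a) = k} is homotopy equivalent to the space P_k(N) := {p ∈ M(N,ℂ) : p² = p and rank p = k} of rank-k idempotent matrices, both equipped with the subspace topology from M(N,ℂ). -/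
/-!
The map `a ↦ P(a)`, the spectral projection onto `E₊(a)` along `E₋(a)`, is a homotopy equivalence
with inverse `p ↦ 2p - 1`: the composite on idempotents is the identity, and the segment from `a`
to `2P(a) - 1` stays among hyperbolic matrices with the same spectral projection.

The projection is handled through annihilating polynomials instead of a contour integral. It is the
only matrix `p` with `f(a) p = 0` and `g(a) (1 - p) = 0`, where `f` is a product of `N` linear
factors with roots in the right half plane and `g` such a product for the left half plane
(`IsSplit`). Everything rests on a Bezout identity (`exists_bezout`): if the roots of `f` and `g`
lie in the two *closed* half planes, then `f(a)` and `g(a)` still generate the unit left ideal,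
because `a` has no eigenvalue on the imaginary axis.

Since closed half planes are allowed there, a compactness argument gives continuity of `P`
(`continuous_spectralProj`): if `P(b)` stayed away from `P(a)` as `b → a`, the normalized
differences `(P(b) - P(a)) / ‖P(b) - P(a)‖` would have a limit point `e` of norm one, while the
roots of the annihilating polynomials are bounded and hence accumulate too. Passing to the limit,
`e` is killed both by a polynomial in `a` with roots in the right closed half plane and by one with
roots in the left closed half plane, so `e = 0`.
-/

open Module

open Polynomial Topology

/-- The monic polynomial with roots `l i`, counted with multiplicity. -/
noncomputable def rootPoly {N : ℕ} (l : Fin N → ℂ) : ℂ[X] := ∏ i, (X - C (l i))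

theorem eval_rootPoly_eq_zero {N : ℕ} {l : Fin N → ℂ} {z : ℂ} :
    (rootPoly l).eval z = 0 ↔ ∃ i, z = l i := by
  simp [rootPoly, eval_prod, Finset.prod_eq_zero_iff, sub_eq_zero]

theorem continuous_aeval_rootPoly {N : ℕ} :
    Continuous fun x : (Fin N → ℂ) × Matrix (Fin N) (Fin N) ℂ => aeval x.2 (rootPoly x.1) := by
  unfold rootPoly
  generalize (Finset.univ : Finset (Fin N)) = s
  induction s using Finset.induction_on with
  | empty => simpa using continuous_const
  | insert i s hi ih =>
    simp only [Finset.prod_insert hi, map_mul, map_sub, aeval_X, aeval_C]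
    refine Continuous.mul (continuous_snd.sub ?_) ih
    simp only [Algebra.algebraMap_eq_smul_one]
    fun_prop

theorem aeval_mul_comm {N : ℕ} {a p : Matrix (Fin N) (Fin N) ℂ} (h : a * p = p * a) (q : ℂ[X]) :
    aeval a q * p = p * aeval a q := by
  induction q using Polynomial.induction_on' with
  | add f g hf hg => rw [map_add, add_mul, mul_add, hf, hg]
  | monomial n c =>
    rw [aeval_monomial]
    have hc : Commute (algebraMap ℂ (Matrix (Fin N) (Fin N) ℂ) c) p := Algebra.commutes c p
    exact hc.mul_left (Commute.pow_left h n)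

/-- If the roots of `f` lie in the closed right half plane and those of `g` in the closed left half
plane, a common root is purely imaginary, so `gcd f g` takes an invertible value at a hyperbolic
matrix `a`. -/
theorem exists_bezout {N : ℕ} [NeZero N] {a : Matrix (Fin N) (Fin N) ℂ} (ha : a ∈ hypMatrix N)
    {f g : ℂ[X]} (hf : ∀ z, f.eval z = 0 → 0 ≤ z.re) (hg : ∀ z, g.eval z = 0 → z.re ≤ 0) :
    ∃ c d : Matrix (Fin N) (Fin N) ℂ, c * aeval a f + d * aeval a g = 1 := by
  classical
  have hu : IsUnit (aeval a (EuclideanDomain.gcd f g)) := by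
    rw [← spectrum.zero_notMem_iff ℂ,
      spectrum.map_polynomial_aeval_of_nonempty a _
        (spectrum.nonempty_of_isAlgClosed_of_finiteDimensional ℂ a)]
    rintro ⟨z, hz, h0⟩
    replace h0 : (EuclideanDomain.gcd f g).eval z = 0 := h0
    have h1 : f.eval z = 0 := by
      obtain ⟨q, hq⟩ := EuclideanDomain.gcd_dvd_left f g
      rw [hq, eval_mul, h0, zero_mul]
    have h2 : g.eval z = 0 := by
      obtain ⟨q, hq⟩ := EuclideanDomain.gcd_dvd_right f g
      rw [hq, eval_mul, h0, zero_mul]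
    exact ha z hz (le_antisymm (hg z h2) (hf z h1))
  obtain ⟨u, hu⟩ := hu
  rw [EuclideanDomain.gcd_eq_gcd_ab f g, map_add, mul_comm f, mul_comm g, map_mul, map_mul] at hu
  refine ⟨u⁻¹.val * aeval a (EuclideanDomain.gcdA f g),
    u⁻¹.val * aeval a (EuclideanDomain.gcdB f g), ?_⟩
  rw [mul_assoc, mul_assoc, ← mul_add, ← hu, Units.inv_mul]

theorem eq_zero_of_aeval_mul {N : ℕ} [NeZero N] {a : Matrix (Fin N) (Fin N) ℂ}
    (ha : a ∈ hypMatrix N) {f g : ℂ[X]} (hf : ∀ z, f.eval z = 0 → 0 ≤ z.re)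
    (hg : ∀ z, g.eval z = 0 → z.re ≤ 0) {q : Matrix (Fin N) (Fin N) ℂ}
    (h1 : aeval a f * q = 0) (h2 : aeval a g * q = 0) : q = 0 := by
  obtain ⟨c, d, h⟩ := exists_bezout ha hf hg
  rw [← one_mul q, ← h, add_mul, mul_assoc, mul_assoc, h1, h2, mul_zero, mul_zero, add_zero]

theorem eq_zero_of_aeval_mulVec {N : ℕ} [NeZero N] {a : Matrix (Fin N) (Fin N) ℂ}
    (ha : a ∈ hypMatrix N) {f g : ℂ[X]} (hf : ∀ z, f.eval z = 0 → 0 ≤ z.re)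
    (hg : ∀ z, g.eval z = 0 → z.re ≤ 0) {v : Fin N → ℂ}
    (h1 : (aeval a f).mulVec v = 0) (h2 : (aeval a g).mulVec v = 0) : v = 0 := by
  obtain ⟨c, d, h⟩ := exists_bezout ha hf hg
  rw [← Matrix.one_mulVec v, ← h, Matrix.add_mulVec, ← Matrix.mulVec_mulVec,
    ← Matrix.mulVec_mulVec, h1, h2, Matrix.mulVec_zero, Matrix.mulVec_zero, add_zero]

/-! ### The spectral projection -/

/-- `p` is the spectral projection of `a` for the right half plane, certified by polynomials:
`p` is an idempotent commuting with `a`, the polynomial with roots `l` in the open right half plane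
kills `a` on the range of `p`, and the polynomial with roots `r` in the open left half plane kills
`a` on the kernel of `p`. The roots need not be eigenvalues of `a`. -/
structure IsSplit {N : ℕ} (a p : Matrix (Fin N) (Fin N) ℂ) (l r : Fin N → ℂ) : Prop where
  idem : p * p = p
  comm : a * p = p * a
  left_pos : ∀ i, 0 < (l i).re
  right_neg : ∀ i, (r i).re < 0
  left_kill : aeval a (rootPoly l) * p = 0
  right_kill : aeval a (rootPoly r) * (1 - p) = 0

namespace IsSplit

variable {N : ℕ} {a p : Matrix (Fin N) (Fin N) ℂ} {l r : Fin N → ℂ}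

theorem nonneg_of_eval (h : IsSplit a p l r) (z : ℂ) (hz : (rootPoly l).eval z = 0) :
    0 ≤ z.re := by
  obtain ⟨i, rfl⟩ := eval_rootPoly_eq_zero.1 hz
  exact (h.left_pos i).le

theorem nonpos_of_eval (h : IsSplit a p l r) (z : ℂ) (hz : (rootPoly r).eval z = 0) :
    z.re ≤ 0 := by
  obtain ⟨i, rfl⟩ := eval_rootPoly_eq_zero.1 hz
  exact (h.right_neg i).le

/-- The product of the two annihilating polynomials kills `a`, so every eigenvalue of `a` is one of
their roots. -/
theorem mem_hypMatrix (h : IsSplit a p l r) : a ∈ hypMatrix N := by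
  intro z hz
  have h0 : aeval a (rootPoly l * rootPoly r) = 0 := by
    have h1 : aeval a (rootPoly l * rootPoly r) * p = 0 := by
      rw [mul_comm, map_mul, mul_assoc, h.left_kill, mul_zero]
    have h2 : aeval a (rootPoly l * rootPoly r) * (1 - p) = 0 := by
      rw [map_mul, mul_assoc, h.right_kill, mul_zero]
    rw [mul_sub, h1, mul_one, sub_zero] at h2
    exact h2
  have h3 := spectrum.subset_polynomial_aeval a (rootPoly l * rootPoly r) ⟨z, hz, rfl⟩
  have : Nontrivial (Matrix (Fin N) (Fin N) ℂ) := by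
    by_contra hn
    rw [not_nontrivial_iff_subsingleton] at hn
    simp [spectrum.of_subsingleton] at hz
  rw [h0, spectrum.zero_eq, Set.mem_singleton_iff] at h3
  replace h3 : (rootPoly l * rootPoly r).eval z = 0 := h3
  rw [eval_mul, mul_eq_zero] at h3
  rcases h3 with h3 | h3
  · obtain ⟨i, rfl⟩ := eval_rootPoly_eq_zero.1 h3
    exact (h.left_pos i).ne'
  · obtain ⟨i, rfl⟩ := eval_rootPoly_eq_zero.1 h3
    exact (h.right_neg i).ne

theorem unique [NeZero N] (h : IsSplit a p l r) {p' : Matrix (Fin N) (Fin N) ℂ}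
    {l' r' : Fin N → ℂ} (h' : IsSplit a p' l' r') : p = p' := by
  rw [← sub_eq_zero]
  refine eq_zero_of_aeval_mul h.mem_hypMatrix (f := rootPoly l * rootPoly l')
    (g := rootPoly r * rootPoly r') ?_ ?_ ?_ ?_
  · intro z hz
    rw [eval_mul, mul_eq_zero] at hz
    exact hz.elim (h.nonneg_of_eval z) (h'.nonneg_of_eval z)
  · intro z hz
    rw [eval_mul, mul_eq_zero] at hz
    exact hz.elim (h.nonpos_of_eval z) (h'.nonpos_of_eval z)
  · rw [mul_sub]
    nth_rewrite 1 [mul_comm]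
    rw [map_mul, map_mul, mul_assoc, h.left_kill, mul_assoc, h'.left_kill, mul_zero, mul_zero,
      sub_zero]
  · have e : p - p' = (1 - p') - (1 - p) := by abel
    rw [e, mul_sub, map_mul, mul_assoc, h'.right_kill, ← map_mul, mul_comm, map_mul, mul_assoc,
      h.right_kill, mul_zero, mul_zero, sub_zero]

/-- The generalized eigenspaces span `ℂᴺ`; `p` fixes those for eigenvalues in the right half plane
and kills all others, so `E₊(a)` is the range of `p`. -/
theorem Eplus_eq_range [NeZero N] (h : IsSplit a p l r) :
    Eplus N a = LinearMap.range (Matrix.toLin' p) := by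
  have key : ∀ (μ : ℂ) (v : Fin N → ℂ),
      v ∈ Module.End.maxGenEigenspace (Matrix.toLin' a) μ →
      ∃ m : ℕ, (aeval a ((X - C μ) ^ m)).mulVec v = 0 := by
    intro μ v hv
    obtain ⟨m, hm⟩ := (Module.End.mem_maxGenEigenspace _ _ _).1 hv
    refine ⟨m, ?_⟩
    rw [← hm, ← Matrix.toLin'_apply]
    congr 1
    rw [map_pow, Matrix.toLin'_pow, map_sub, aeval_X, aeval_C, map_sub,
      Algebra.algebraMap_eq_smul_one, map_smul, Matrix.toLin'_one]
    rfl
  have hcomm : ∀ q : ℂ[X], aeval a q * p = p * aeval a q := aeval_mul_comm h.comm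
  have hroot : ∀ {μ z : ℂ} {m : ℕ}, ((X - C μ) ^ m).eval z = 0 → z = μ := by
    intro μ z m hz
    rw [eval_pow] at hz
    have := eq_zero_of_pow_eq_zero hz
    simpa [sub_eq_zero] using this
  have hpos : ∀ (μ : ℂ) (v : Fin N → ℂ), 0 ≤ μ.re →
      v ∈ Module.End.maxGenEigenspace (Matrix.toLin' a) μ → p.mulVec v = v := by
    intro μ v hμ hv
    obtain ⟨m, hm⟩ := key μ v hv
    have : (1 - p).mulVec v = 0 := by
      refine eq_zero_of_aeval_mulVec h.mem_hypMatrix (f := (X - C μ) ^ m) (g := rootPoly r)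
        (fun z hz => ?_) h.nonpos_of_eval ?_ ?_
      · rw [hroot hz]; exact hμ
      · have e : aeval a ((X - C μ) ^ m) * (1 - p) = (1 - p) * aeval a ((X - C μ) ^ m) := by
          rw [mul_sub, sub_mul, hcomm, mul_one, one_mul]
        rw [Matrix.mulVec_mulVec, e, ← Matrix.mulVec_mulVec, hm, Matrix.mulVec_zero]
      · rw [Matrix.mulVec_mulVec, h.right_kill, Matrix.zero_mulVec]
    rw [Matrix.sub_mulVec, Matrix.one_mulVec, sub_eq_zero] at this
    exact this.symm
  have hneg : ∀ (μ : ℂ) (v : Fin N → ℂ), μ.re ≤ 0 →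
      v ∈ Module.End.maxGenEigenspace (Matrix.toLin' a) μ → p.mulVec v = 0 := by
    intro μ v hμ hv
    obtain ⟨m, hm⟩ := key μ v hv
    refine eq_zero_of_aeval_mulVec h.mem_hypMatrix (f := rootPoly l) (g := (X - C μ) ^ m)
      h.nonneg_of_eval (fun z hz => ?_) ?_ ?_
    · rw [hroot hz]; exact hμ
    · rw [Matrix.mulVec_mulVec, h.left_kill, Matrix.zero_mulVec]
    · rw [Matrix.mulVec_mulVec, hcomm, ← Matrix.mulVec_mulVec, hm, Matrix.mulVec_zero]
  apply le_antisymm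
  · refine iSup₂_le fun μ hμ v hv => ?_
    exact ⟨v, hpos μ v (le_of_lt hμ) hv⟩
  · have htop : (⊤ : Submodule ℂ (Fin N → ℂ)) ≤ (Eplus N a).comap (Matrix.toLin' p) := by
      rw [← Module.End.iSup_maxGenEigenspace_eq_top (Matrix.toLin' a)]
      refine iSup_le fun μ v hv => ?_
      rw [Submodule.mem_comap, Matrix.toLin'_apply]
      rcases le_or_gt μ.re 0 with hμ | hμ
      · rw [hneg μ v hμ hv]
        exact Submodule.zero_mem _
      · rw [hpos μ v hμ.le hv]
        exact (le_iSup₂ (f := fun (μ : ℂ) (_ : μ ∈ {μ : ℂ | 0 < μ.re}) =>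
          Module.End.maxGenEigenspace (Matrix.toLin' a) μ) μ hμ) hv
    rintro _ ⟨v, rfl⟩
    exact htop (Submodule.mem_top (x := v))

theorem finrank_Eplus [NeZero N] (h : IsSplit a p l r) : finrank ℂ (Eplus N a) = p.rank := by
  rw [h.Eplus_eq_range]
  rfl

end IsSplit

/-! ### Existence and continuity -/

theorem exists_charpoly_eq_rootPoly {N : ℕ} (a : Matrix (Fin N) (Fin N) ℂ) :
    ∃ l : Fin N → ℂ, a.charpoly = rootPoly l := by
  have h1 : a.charpoly = (a.charpoly.roots.map fun z => X - C z).prod :=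
    (IsAlgClosed.splits a.charpoly).eq_prod_roots_of_monic a.charpoly_monic
  have h2 : a.charpoly.roots.card = N := by
    rw [← (IsAlgClosed.splits a.charpoly).natDegree_eq_card_roots,
      Matrix.charpoly_natDegree_eq_dim, Fintype.card_fin]
  generalize a.charpoly.roots = s at h1 h2
  obtain ⟨L, rfl⟩ := Quot.exists_rep s
  obtain rfl : L.length = N := h2
  refine ⟨L.get, ?_⟩
  rw [h1, rootPoly, ← List.prod_ofFn]
  change (L.map _).prod = _
  conv_lhs => rw [← List.ofFn_get L, List.map_ofFn]
  rfl

section Norm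

open scoped Matrix.Norms.Operator

/-- The roots are taken among the eigenvalues of `a`, with the eigenvalues in the wrong half plane
replaced by `1`, respectively `-1`. This keeps the number of roots equal to `N` and the roots
bounded in terms of `a`. -/
theorem exists_isSplit {N : ℕ} [NeZero N] {a : Matrix (Fin N) (Fin N) ℂ} (ha : a ∈ hypMatrix N) :
    ∃ p l r, IsSplit a p l r ∧ (∀ i, ‖l i‖ ≤ ‖a‖ + 1) ∧ ∀ i, ‖r i‖ ≤ ‖a‖ + 1 := by
  obtain ⟨e, he⟩ := exists_charpoly_eq_rootPoly a
  have hspec : ∀ i, e i ∈ spectrum ℂ a := fun i => by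
    rw [Matrix.mem_spectrum_iff_isRoot_charpoly, he]
    exact eval_rootPoly_eq_zero.2 ⟨i, rfl⟩
  have hnorm : ∀ i, ‖e i‖ ≤ ‖a‖ + 1 := fun i =>
    (spectrum.norm_le_norm_of_mem (hspec i)).trans (by linarith)
  set l : Fin N → ℂ := fun i => if 0 < (e i).re then e i else 1 with hl
  set r : Fin N → ℂ := fun i => if 0 < (e i).re then -1 else e i with hr
  have hlpos : ∀ i, 0 < (l i).re := fun i => by
    simp only [hl]; split_ifs with h
    · exact h
    · simp
  have hrneg : ∀ i, (r i).re < 0 := fun i => by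
    simp only [hr]; split_ifs with h
    · simp
    · exact lt_of_le_of_ne (not_lt.1 h) (ha _ (hspec i))
  have hcop : IsCoprime (rootPoly l) (rootPoly r) := by
    unfold rootPoly
    refine IsCoprime.prod_left fun i _ => IsCoprime.prod_right fun j _ => ?_
    refine isCoprime_X_sub_C_of_isUnit_sub (sub_ne_zero.2 fun h => ?_).isUnit
    have h1 := hlpos i
    rw [h] at h1
    exact h1.not_gt (hrneg j)
  have hdvd : a.charpoly ∣ rootPoly l * rootPoly r := by
    rw [he, rootPoly, rootPoly, rootPoly, ← Finset.prod_mul_distrib]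
    refine Finset.prod_dvd_prod_of_dvd _ _ fun i _ => ?_
    simp only [hl, hr]
    split_ifs
    · exact dvd_mul_right _ _
    · exact dvd_mul_left _ _
  -- by Cayley-Hamilton
  have hzero : aeval a (rootPoly l * rootPoly r) = 0 := by
    obtain ⟨q, hq⟩ := hdvd
    rw [hq, map_mul, Matrix.aeval_self_charpoly, zero_mul]
  obtain ⟨u, w, huw⟩ := hcop
  have h1 : 1 - aeval a (w * rootPoly r) = aeval a (u * rootPoly l) := by
    rw [← map_one (aeval (R := ℂ) a), ← huw, map_add]; abel
  have hp : aeval a (w * rootPoly r) * (1 - aeval a (w * rootPoly r)) = 0 := by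
    rw [h1, ← map_mul, show w * rootPoly r * (u * rootPoly l) =
      w * u * (rootPoly l * rootPoly r) by ring, map_mul, hzero, mul_zero]
  refine ⟨aeval a (w * rootPoly r), l, r, ⟨?_, ?_, hlpos, hrneg, ?_, ?_⟩, fun i => ?_, fun i => ?_⟩
  · rw [mul_sub, mul_one, sub_eq_zero] at hp
    exact hp.symm
  · exact (aeval_mul_comm rfl _).symm
  · rw [← map_mul, show rootPoly l * (w * rootPoly r) = w * (rootPoly l * rootPoly r) by ring,
      map_mul, hzero, mul_zero]
  · rw [h1, ← map_mul, show rootPoly r * (u * rootPoly l) = u * (rootPoly l * rootPoly r) by ring,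
      map_mul, hzero, mul_zero]
  · simp only [hl]; split_ifs
    · exact hnorm i
    · simp
  · simp only [hr]; split_ifs
    · simp
    · exact hnorm i

/-- The spectral projection of a hyperbolic matrix onto `E₊` along `E₋`. -/
noncomputable def spectralProj {N : ℕ} [NeZero N] (a : hypMatrix N) :
    Matrix (Fin N) (Fin N) ℂ :=
  (exists_isSplit a.2).choose

theorem spectralProj_spec {N : ℕ} [NeZero N] (a : hypMatrix N) :
    ∃ l r, IsSplit a.1 (spectralProj a) l r ∧ (∀ i, ‖l i‖ ≤ ‖a.1‖ + 1) ∧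
      ∀ i, ‖r i‖ ≤ ‖a.1‖ + 1 :=
  (exists_isSplit a.2).choose_spec

/-- Continuity of the spectral projection, inside the scope of the operator norm. If it failed at
`a`, the normalized differences `(P(b) - P(a)) / ‖P(b) - P(a)‖` and the roots of the annihilating
polynomials of `b` would converge along an ultrafilter of matrices `b` tending to `a`; the limit of
the former has norm one, but is killed by polynomials in `a` to which `exists_bezout` applies. -/
theorem continuous_spectralProj_aux {N : ℕ} [NeZero N] :
    Continuous (spectralProj : hypMatrix N → Matrix (Fin N) (Fin N) ℂ) := by
  have : ProperSpace (Matrix (Fin N) (Fin N) ℂ) := FiniteDimensional.proper ℂ _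
  choose l r hlr hl hr using spectralProj_spec (N := N)
  rw [continuous_iff_continuousAt]
  intro a
  by_contra hcon
  obtain ⟨ε, hε, hfreq⟩ : ∃ ε > 0, ∃ᶠ b in 𝓝 a, ε ≤ ‖spectralProj b - spectralProj a‖ := by
    by_contra hno
    push Not at hno
    refine hcon (Metric.tendsto_nhds.2 fun ε hε => ?_)
    simpa only [dist_eq_norm] using hno ε hε
  set d : hypMatrix N → Matrix (Fin N) (Fin N) ℂ := fun b => spectralProj b - spectralProj a
  -- an ultrafilter converging to `a` along which the projections stay away from that of `a`
  have hne : (𝓝 a ⊓ Filter.principal {b | ε ≤ ‖d b‖}).NeBot :=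
    Filter.frequently_mem_iff_neBot.1 hfreq
  set U : Ultrafilter (hypMatrix N) := Ultrafilter.of (𝓝 a ⊓ Filter.principal {b | ε ≤ ‖d b‖})
  have hU := Ultrafilter.of_le (𝓝 a ⊓ Filter.principal {b | ε ≤ ‖d b‖})
  have hUa : (U : Filter (hypMatrix N)) ≤ 𝓝 a := hU.trans inf_le_left
  have hUd : ∀ᶠ b in (U : Filter (hypMatrix N)), ε ≤ ‖d b‖ :=
    Filter.le_principal_iff.1 (hU.trans inf_le_right)
  have hval : Filter.Tendsto (fun b : hypMatrix N => b.1) U (𝓝 a.1) :=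
    (continuous_subtype_val.tendsto a).mono_left hUa
  have hbd : ∀ᶠ b in (U : Filter (hypMatrix N)), ‖b.1‖ ≤ ‖a.1‖ + 1 := by
    filter_upwards [hval.norm.eventually (gt_mem_nhds (lt_add_one ‖a.1‖))] with b hb
    exact hb.le
  have hcpt : ∀ {E : Type} [NormedAddCommGroup E] [ProperSpace E] (f : hypMatrix N → E) (R : ℝ),
      (∀ᶠ b in (U : Filter (hypMatrix N)), ‖f b‖ ≤ R) → ∃ x, Filter.Tendsto f U (𝓝 x) := by
    intro E _ _ f R hf
    obtain ⟨x, -, hx⟩ := (isCompact_closedBall (0 : E) R).ultrafilter_le_nhds (U.map f) (by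
      rw [Filter.le_principal_iff]
      exact Filter.mem_of_superset hf fun b hb => mem_closedBall_zero_iff.2 hb)
    exact ⟨x, hx⟩
  obtain ⟨l₀, hl₀⟩ := hcpt l (‖a.1‖ + 2) (by
    filter_upwards [hbd] with b hb
    exact (pi_norm_le_iff_of_nonneg (by positivity)).2 fun i => (hl b i).trans (by linarith))
  obtain ⟨r₀, hr₀⟩ := hcpt r (‖a.1‖ + 2) (by
    filter_upwards [hbd] with b hb
    exact (pi_norm_le_iff_of_nonneg (by positivity)).2 fun i => (hr b i).trans (by linarith))
  obtain ⟨c, hc⟩ := hcpt (fun b => ((‖d b‖⁻¹ : ℝ) : ℂ)) ε⁻¹ (by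
    filter_upwards [hUd] with b hb
    rw [Complex.norm_real, norm_inv, norm_norm]
    exact inv_anti₀ hε hb)
  obtain ⟨e, he⟩ := hcpt (fun b => ((‖d b‖⁻¹ : ℝ) : ℂ) • d b) 1 (by
    filter_upwards [hUd] with b hb
    have : 0 < ‖d b‖ := hε.trans_le hb
    rw [norm_smul, Complex.norm_real, norm_inv, norm_norm, inv_mul_cancel₀ this.ne'])
  have he1 : ‖e‖ = 1 := by
    refine tendsto_nhds_unique (he.norm.congr' ?_) tendsto_const_nhds
    filter_upwards [hUd] with b hb
    have : 0 < ‖d b‖ := hε.trans_le hb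
    rw [norm_smul, Complex.norm_real, norm_inv, norm_norm, inv_mul_cancel₀ this.ne']
  have hl₀pos : ∀ i, 0 ≤ (l₀ i).re := fun i =>
    ge_of_tendsto' ((Complex.continuous_re.tendsto _).comp
      ((continuous_apply i).tendsto _ |>.comp hl₀)) fun b => ((hlr b).left_pos i).le
  have hr₀neg : ∀ i, (r₀ i).re ≤ 0 := fun i =>
    le_of_tendsto' ((Complex.continuous_re.tendsto _).comp
      ((continuous_apply i).tendsto _ |>.comp hr₀)) fun b => ((hlr b).right_neg i).le
  have hF : Filter.Tendsto (fun b : hypMatrix N => aeval b.1 (rootPoly (l b))) U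
      (𝓝 (aeval a.1 (rootPoly l₀))) :=
    (continuous_aeval_rootPoly.tendsto (l₀, a.1)).comp (hl₀.prodMk_nhds hval)
  have hG : Filter.Tendsto (fun b : hypMatrix N => aeval b.1 (rootPoly (r b))) U
      (𝓝 (aeval a.1 (rootPoly r₀))) :=
    (continuous_aeval_rootPoly.tendsto (r₀, a.1)).comp (hr₀.prodMk_nhds hval)
  -- the limits of `f(b) P(b) / ‖d b‖ = 0` and `g(b) (1 - P(b)) / ‖d b‖ = 0`
  have h1 : aeval a.1 (rootPoly l₀) * (e + c • spectralProj a) = 0 := by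
    refine tendsto_nhds_unique (hF.mul (he.add (hc.smul_const _))) ?_
    refine tendsto_const_nhds.congr fun b => ?_
    rw [← smul_add, sub_add_cancel, mul_smul_comm, (hlr b).left_kill, smul_zero]
  have h2 : aeval a.1 (rootPoly r₀) * (c • (1 - spectralProj a) - e) = 0 := by
    refine tendsto_nhds_unique (hG.mul ((hc.smul_const _).sub he)) ?_
    refine tendsto_const_nhds.congr fun b => ?_
    rw [← smul_sub, sub_sub, add_sub_cancel, mul_smul_comm, (hlr b).right_kill, smul_zero]
  have hzero : e = 0 := by
    refine eq_zero_of_aeval_mul a.2 (f := rootPoly (l a) * rootPoly l₀)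
      (g := rootPoly (r a) * rootPoly r₀) (fun z hz => ?_) (fun z hz => ?_) ?_ ?_
    · rw [eval_mul, mul_eq_zero] at hz
      refine hz.elim ((hlr a).nonneg_of_eval z) fun h => ?_
      obtain ⟨i, rfl⟩ := eval_rootPoly_eq_zero.1 h
      exact hl₀pos i
    · rw [eval_mul, mul_eq_zero] at hz
      refine hz.elim ((hlr a).nonpos_of_eval z) fun h => ?_
      obtain ⟨i, rfl⟩ := eval_rootPoly_eq_zero.1 h
      exact hr₀neg i
    · have h3 : aeval a.1 (rootPoly (l a) * rootPoly l₀) * (c • spectralProj a) = 0 := by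
        rw [mul_comm, map_mul, mul_assoc, mul_smul_comm, (hlr a).left_kill, smul_zero, mul_zero]
      have h4 : aeval a.1 (rootPoly (l a) * rootPoly l₀) * (e + c • spectralProj a) = 0 := by
        rw [map_mul, mul_assoc, h1, mul_zero]
      rwa [mul_add, h3, add_zero] at h4
    · have h3 : aeval a.1 (rootPoly (r a) * rootPoly r₀) * (c • (1 - spectralProj a)) = 0 := by
        rw [mul_comm, map_mul, mul_assoc, mul_smul_comm, (hlr a).right_kill, smul_zero, mul_zero]
      have h4 : aeval a.1 (rootPoly (r a) * rootPoly r₀) * (c • (1 - spectralProj a) - e) = 0 := by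
        rw [map_mul, mul_assoc, h2, mul_zero]
      rwa [mul_sub, h3, zero_sub, neg_eq_zero] at h4
  rw [hzero, norm_zero] at he1
  exact zero_ne_one he1

end Norm

/-- Continuity for the product topology on matrices, which is definitionally the topology of the
operator norm. -/
theorem continuous_spectralProj {N : ℕ} [NeZero N] :
    Continuous (spectralProj : hypMatrix N → Matrix (Fin N) (Fin N) ℂ) :=
  continuous_spectralProj_aux

theorem IsSplit.spectralProj_eq {N : ℕ} [NeZero N] {a : hypMatrix N}
    {p : Matrix (Fin N) (Fin N) ℂ} {l r : Fin N → ℂ} (h : IsSplit a.1 p l r) :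
    spectralProj a = p := by
  obtain ⟨l', r', h', -⟩ := spectralProj_spec a
  exact h'.unique h

/-! ### The homotopy -/

/-- If `b` acts on the range of `p` as `s a + t`, then the roots `l` for `a` turn into the roots
`s l + t` for `b`. -/
theorem aeval_rootPoly_affine {N : ℕ} {a b p : Matrix (Fin N) (Fin N) ℂ} (hap : a * p = p * a)
    {s t : ℂ} (hb : b * p = (s • a + t • 1) * p) {l : Fin N → ℂ}
    (hl : aeval a (rootPoly l) * p = 0) :
    aeval b (rootPoly fun i => s * l i + t) * p = 0 := by
  have key : ∀ S : Finset (Fin N), aeval b (∏ i ∈ S, (X - C (s * l i + t))) * p =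
      s ^ S.card • (aeval a (∏ i ∈ S, (X - C (l i))) * p) := by
    intro S
    induction S using Finset.induction_on with
    | empty => simp
    | insert i S hi ih =>
      have hstep : (b - algebraMap ℂ _ (s * l i + t)) * p =
          s • ((a - algebraMap ℂ _ (l i)) * p) := by
        rw [sub_mul, hb]
        simp only [Algebra.algebraMap_eq_smul_one, add_mul, sub_mul, smul_mul_assoc, one_mul,
          add_smul, mul_smul, smul_sub]
        abel
      rw [Finset.prod_insert hi, Finset.prod_insert hi, Finset.card_insert_of_notMem hi, map_mul,
        map_mul, mul_assoc, ih, mul_smul_comm, aeval_mul_comm hap, ← mul_assoc, map_sub, aeval_X,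
        aeval_C, hstep, smul_mul_assoc, smul_smul, ← pow_succ, mul_assoc,
        ← aeval_mul_comm hap, ← mul_assoc, map_sub, aeval_X, aeval_C]
  have := key Finset.univ
  rw [← rootPoly, ← rootPoly, hl, smul_zero] at this
  exact this

/-- The segment from `a` to `2p - 1` keeps the spectral projection `p`: its points act on the range
of `p` as `(1 - t) a + t` and on the kernel as `(1 - t) a - t`, so the roots become
convex combinations with `1`, respectively `-1`, and stay in their half planes. -/
theorem IsSplit.segment {N : ℕ} {a p : Matrix (Fin N) (Fin N) ℂ} {l r : Fin N → ℂ}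
    (h : IsSplit a p l r) {t : ℝ} (h0 : 0 ≤ t) (h1 : t ≤ 1) :
    ∃ l' r', IsSplit (((1 - t : ℝ) : ℂ) • a + (t : ℂ) • (2 * p - 1)) p l' r' := by
  have hs : 0 ≤ 1 - t := by linarith
  have hcomm : a * (1 - p) = (1 - p) * a := by rw [mul_sub, sub_mul, h.comm, mul_one, one_mul]
  have hpos : ∀ x : ℝ, 0 < x → 0 < (1 - t) * x + t := fun x hx => by
    rcases h0.eq_or_lt with rfl | h0
    · simpa using hx
    · have := mul_nonneg hs hx.le
      linarith
  refine ⟨fun i => ((1 - t : ℝ) : ℂ) * l i + t, fun i => ((1 - t : ℝ) : ℂ) * r i + (-t : ℂ),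
    h.idem, ?_, fun i => ?_, fun i => ?_, ?_, ?_⟩
  · simp only [add_mul, mul_add, smul_mul_assoc, mul_smul_comm, h.comm, sub_mul, mul_sub, two_mul,
      one_mul, mul_one]
  · rw [Complex.add_re, Complex.re_ofReal_mul, Complex.ofReal_re]
    exact hpos _ (h.left_pos i)
  · rw [Complex.add_re, Complex.re_ofReal_mul, Complex.neg_re, Complex.ofReal_re]
    have := hpos (-(r i).re) (neg_pos.2 (h.right_neg i))
    linarith
  · refine aeval_rootPoly_affine h.comm ?_ h.left_kill
    have e : (2 * p - 1) * p = p := by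
      rw [sub_mul, mul_assoc, h.idem, one_mul, two_mul, add_sub_cancel_right]
    rw [add_mul, add_mul, smul_mul_assoc _ (2 * p - 1), e, smul_mul_assoc (t : ℂ), one_mul]
  · refine aeval_rootPoly_affine hcomm ?_ h.right_kill
    have e : (2 * p - 1) * (1 - p) = -(1 - p) := by
      simp only [mul_sub, sub_mul, h.idem, mul_one, one_mul, two_mul, add_mul]
      abel
    rw [add_mul, add_mul, smul_mul_assoc _ (2 * p - 1), e, smul_mul_assoc (-t : ℂ), one_mul,
      smul_neg, neg_smul]

theorem isSplit_two_mul_sub_one {N : ℕ} [NeZero N] {p : Matrix (Fin N) (Fin N) ℂ}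
    (hp : p * p = p) : IsSplit (2 * p - 1) p (fun _ => 1) (fun _ => -1) := by
  obtain ⟨n, hn⟩ := Nat.exists_eq_add_one_of_ne_zero (NeZero.ne N)
  have hpow : ∀ q : ℂ[X], q ^ N = q ^ (n + 1) := fun q => congrArg (q ^ ·) hn
  have hone : algebraMap ℂ (Matrix (Fin N) (Fin N) ℂ) 1 = 1 := map_one _
  refine ⟨hp, ?_, fun i => by simp, fun i => by simp, ?_, ?_⟩
  · simp only [sub_mul, mul_sub, two_mul, add_mul, mul_add, one_mul, mul_one]
  · have e : (2 * p - 1 - 1) * p = 0 := by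
      simp only [sub_mul, hp, two_mul, one_mul, add_mul]
      abel
    rw [rootPoly, Finset.prod_const, Finset.card_univ, Fintype.card_fin, hpow, pow_succ, map_mul,
      mul_assoc, map_sub, aeval_X, aeval_C, hone, e, mul_zero]
  · have e : (2 * p - 1 - -1) * (1 - p) = 0 := by
      simp only [sub_mul, mul_sub, hp, two_mul, one_mul, add_mul, mul_one]
      simp
    rw [rootPoly, Finset.prod_const, Finset.card_univ, Fintype.card_fin, hpow, pow_succ, map_mul,
      mul_assoc, map_sub, aeval_X, aeval_C, map_neg (algebraMap ℂ _), hone, e, mul_zero]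

/-- **Homotopy type of the components of the hyperbolic matrices**: the space
`M_k = {a ∈ M(N,iℝ) : dim E₊(a) = k}` is homotopy equivalent to the space `P_k(N)` of
rank-`k` idempotent `N×N` complex matrices. -/
theorem hyperbolic_component_homotopy_equiv (N : ℕ) (hN : 1 ≤ N) (k : ℕ) (hk : k ≤ N) :
    Nonempty
      (ContinuousMap.HomotopyEquiv
        {a : ↥(hypMatrix N) // finrank ℂ ↥(Eplus N a.1) = k}
        {p : Matrix (Fin N) (Fin N) ℂ // p * p = p ∧ p.rank = k}) := by
  have : NeZero N := ⟨by omega⟩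
  have hspec : ∀ a : hypMatrix N, ∃ l r, IsSplit a.1 (spectralProj a) l r := fun a => by
    obtain ⟨l, r, h, -⟩ := spectralProj_spec a
    exact ⟨l, r, h⟩
  choose l r hlr using hspec
  let φ : C({a : ↥(hypMatrix N) // finrank ℂ ↥(Eplus N a.1) = k},
      {p : Matrix (Fin N) (Fin N) ℂ // p * p = p ∧ p.rank = k}) :=
    ⟨fun a => ⟨spectralProj a.1, (hlr a.1).idem, by rw [← (hlr a.1).finrank_Eplus, a.2]⟩,
      (continuous_spectralProj.comp continuous_subtype_val).subtype_mk _⟩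
  have hψ : Continuous fun p : {p : Matrix (Fin N) (Fin N) ℂ // p * p = p ∧ p.rank = k} =>
      2 * p.1 - 1 := (continuous_const.mul continuous_subtype_val).sub continuous_const
  have hrank : ∀ p : {p : Matrix (Fin N) (Fin N) ℂ // p * p = p ∧ p.rank = k},
      finrank ℂ (Eplus N (2 * p.1 - 1)) = k := fun p => by
    rw [(isSplit_two_mul_sub_one p.2.1).finrank_Eplus, p.2.2]
  let ψ : C({p : Matrix (Fin N) (Fin N) ℂ // p * p = p ∧ p.rank = k},
      {a : ↥(hypMatrix N) // finrank ℂ ↥(Eplus N a.1) = k}) :=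
    ⟨fun p => ⟨⟨2 * p.1 - 1, (isSplit_two_mul_sub_one p.2.1).mem_hypMatrix⟩, hrank p⟩,
      Continuous.subtype_mk (hψ.subtype_mk _) hrank⟩
  -- time is reversed because the homotopy starts at `2P(a) - 1` and ends at `a`
  have hseg := fun (x : unitInterval × {a : ↥(hypMatrix N) // finrank ℂ ↥(Eplus N a.1) = k}) =>
    (hlr x.2.1).segment (t := (unitInterval.symm x.1 : ℝ)) (unitInterval.symm x.1).2.1
      (unitInterval.symm x.1).2.2
  choose l' r' hseg using hseg
  refine ⟨⟨φ, ψ, ⟨⟨⟨fun x => ⟨⟨_, (hseg x).mem_hypMatrix⟩, ?_⟩, ?_⟩, ?_, ?_⟩⟩, ?_⟩⟩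
  · rw [(hseg x).finrank_Eplus, ← (hlr x.2.1).finrank_Eplus, x.2.2]
  · refine Continuous.subtype_mk (Continuous.subtype_mk ?_ _) _
    have hP : Continuous fun x : unitInterval ×
        {a : ↥(hypMatrix N) // finrank ℂ ↥(Eplus N a.1) = k} => spectralProj x.2.1 :=
      continuous_spectralProj.comp (continuous_subtype_val.comp continuous_snd)
    have hA : Continuous fun x : unitInterval ×
        {a : ↥(hypMatrix N) // finrank ℂ ↥(Eplus N a.1) = k} => x.2.1.1 :=
      continuous_subtype_val.comp (continuous_subtype_val.comp continuous_snd)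
    have hT : Continuous fun x : unitInterval ×
        {a : ↥(hypMatrix N) // finrank ℂ ↥(Eplus N a.1) = k} =>
        ((unitInterval.symm x.1 : ℝ)) :=
      continuous_subtype_val.comp (unitInterval.continuous_symm.comp continuous_fst)
    exact ((Complex.continuous_ofReal.comp (continuous_const.sub hT)).smul hA).add
      ((Complex.continuous_ofReal.comp hT).smul
        ((continuous_const.mul hP).sub continuous_const))
  · intro a
    apply Subtype.ext
    apply Subtype.ext
    simp [φ, ψ]
  · intro a
    apply Subtype.ext
    apply Subtype.ext
    simp
  · have : φ.comp ψ = ContinuousMap.id _ := by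
      ext1 p
      apply Subtype.ext
      exact (isSplit_two_mul_sub_one p.2.1).spectralProj_eq
        (a := ⟨2 * p.1 - 1, (isSplit_two_mul_sub_one p.2.1).mem_hypMatrix⟩)
    rw [this]
end
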